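/- Let q = p^h with p an odd prime. Let A be the set of points {⟨(1,x,x^p)⟩ : x ∈ F_q} of PG(2,q), and let N be the set of points on the line X = 0 (the points ⟨(0,y,z)⟩) that are not of the form ⟨(0,x,x^p)⟩ for any nonzero x ∈ F_q. Then A ∪ N is a set without tangents in PG(2,q) of size 2q + 1 − (q−1)/(p−1). -/

import Mathlib

/-!
`PG(2,F)`: points are the 1-dimensional subspaces of `F^3` (modelled as the
projectivization of `Fin 3 → F`), lines are the 2-dimensional subspaces.
-/

variable {F : Type*} [Field F]

/-- The points of `PG(2,F)`: 1-dimensional subspaces of `F^3`. -/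
abbrev PGPoint (F : Type*) [Field F] := Projectivization F (Fin 3 → F)

/-- A line of `PG(2,F)` is a 2-dimensional subspace of `F^3`. -/
def IsProjLine (F : Type*) [Field F] (L : Submodule F (Fin 3 → F)) : Prop :=
  Module.finrank F L = 2

/-- The set of projective points lying on the subspace `L`. -/
def pointsOn (L : Submodule F (Fin 3 → F)) : Set (PGPoint F) :=
  {P | P.submodule ≤ L}

/-- `S` is a set without tangents: no line of `PG(2,F)` meets `S` in exactly one point. -/
def NoTangents (S : Set (PGPoint F)) : Prop :=
  ∀ L : Submodule F (Fin 3 → F), IsProjLine F L →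
    ¬ (∃! P : PGPoint F, P ∈ S ∩ pointsOn L)

/-- The line of `PG(2,F)` with equation `X = 0`. -/
def lineX0 (F : Type*) [Field F] : Submodule F (Fin 3 → F) :=
  LinearMap.ker (LinearMap.proj 0 : (Fin 3 → F) →ₗ[F] F)

/-!
The argument works for the graph `Z = f(Y)` of any additive map `f` over a finite field. The affine
line `Z = m Y + d` meets the graph in a coset of the kernel of `x ↦ f x - m x`, or not at all. If
`m` is a slope `f t / t`, that kernel is nontrivial and the point at infinity has been removed, so
the line carries either no point or several. Otherwise `x ↦ f x - m x` is bijective, and the line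
carries one graph point and its point at infinity. The remaining lines contain `⟨(0,0,1)⟩`; such a
line other than `X = 0` has one graph point as well, and `X = 0` contains a second point because the
`q - 1` quotients `f t / t` cannot exhaust `F`. For `f x = x ^ p ^ k` these quotients are the
`(p ^ k - 1)`-th powers in the cyclic group `Fˣ`, which makes them easy to count.
-/

open Module Projectivization

theorem submodule_eq_span_singleton_iff {V : Type*} [AddCommGroup V] [Module F V]
    {v : V} (hv : v ≠ 0) (P : Projectivization F V) :
    P.submodule = Submodule.span F {v} ↔ P = mk F v hv := by
  rw [← submodule_mk v hv, submodule_injective.eq_iff]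

theorem exists_dual_eq_ker_of_finrank_add_one_eq {V : Type*} [AddCommGroup V] [Module F V]
    [FiniteDimensional F V] {W : Submodule F V} (hW : finrank F W + 1 = finrank F V) :
    ∃ f : Dual F V, f ≠ 0 ∧ W = LinearMap.ker f := by
  have hlt : W < ⊤ := Submodule.lt_top_of_finrank_lt_finrank (by omega)
  obtain ⟨f, hf, hle⟩ := Submodule.exists_le_ker_of_lt_top W hlt
  have hker := Dual.finrank_ker_add_one_of_ne_zero hf
  exact ⟨f, hf, Submodule.eq_of_le_of_finrank_eq hle (by omega)⟩

theorem mk_mem_pointsOn {L : Submodule F (Fin 3 → F)} {v : Fin 3 → F} (hv : v ≠ 0) :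
    mk F v hv ∈ pointsOn L ↔ v ∈ L := by
  rw [pointsOn, Set.mem_ofPred_eq, submodule_mk, Submodule.span_singleton_le_iff_mem]

theorem mem_lineX0 {v : Fin 3 → F} : v ∈ lineX0 F ↔ v 0 = 0 :=
  Iff.rfl

/-- The line `Y = a X`, which meets the line at infinity `X = 0` in `⟨(0,0,1)⟩`. -/
def verticalLine (a : F) : Submodule F (Fin 3 → F) :=
  LinearMap.ker (LinearMap.proj 1 - a • LinearMap.proj 0 : (Fin 3 → F) →ₗ[F] F)

/-- The line `Z = m Y + d X`, which meets the line at infinity `X = 0` in `⟨(0,1,m)⟩`. -/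
def slopeLine (m d : F) : Submodule F (Fin 3 → F) :=
  LinearMap.ker
    (LinearMap.proj 2 - m • LinearMap.proj 1 - d • LinearMap.proj 0 : (Fin 3 → F) →ₗ[F] F)

theorem mem_verticalLine {a : F} {v : Fin 3 → F} : v ∈ verticalLine a ↔ v 1 = a * v 0 := by
  simp [verticalLine, sub_eq_zero]

theorem mem_slopeLine {m d : F} {v : Fin 3 → F} :
    v ∈ slopeLine m d ↔ v 2 = m * v 1 + d * v 0 := by
  simp [slopeLine, sub_sub, sub_eq_zero]

theorem IsProjLine.eq_lineX0_or_verticalLine_or_slopeLine {L : Submodule F (Fin 3 → F)}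
    (hL : IsProjLine F L) :
    L = lineX0 F ∨ (∃ a, L = verticalLine a) ∨ ∃ m d, L = slopeLine m d := by
  have hdim : finrank F L + 1 = finrank F (Fin 3 → F) := by
    rw [show finrank F L = 2 from hL, finrank_fin_fun]
  obtain ⟨f, hf, rfl⟩ := exists_dual_eq_ker_of_finrank_add_one_eq hdim
  obtain ⟨w, rfl⟩ := (dotProductEquiv F (Fin 3)).surjective f
  obtain ⟨a, b, c, hfv⟩ : ∃ a b c : F, ∀ v,
      dotProductEquiv F (Fin 3) w v = a * v 0 + b * v 1 + c * v 2 :=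
    ⟨w 0, w 1, w 2, Matrix.vec3_dotProduct w⟩
  by_cases hc : c = 0
  · by_cases hb : b = 0
    · have ha : a ≠ 0 := by
        rintro rfl
        exact hf (LinearMap.ext fun v => by simp [hfv, hb, hc])
      left
      ext v
      simp [mem_lineX0, hfv, ha, hb, hc]
    · right; left
      refine ⟨-a / b, ?_⟩
      ext v
      rw [LinearMap.mem_ker, hfv, mem_verticalLine, hc]
      field_simp
      grind
  · right; right
    refine ⟨-b / c, -a / c, ?_⟩
    ext v
    rw [LinearMap.mem_ker, hfv, mem_slopeLine]
    field_simp
    grind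

/-- The affine point `⟨(1,y,z)⟩`; the line at infinity is `X = 0`. -/
def affinePoint (y z : F) : PGPoint F :=
  mk F ![1, y, z] fun h => one_ne_zero (congrFun h 0)

/-- The point `⟨(0,1,m)⟩` at infinity on the affine lines `Z = m Y + d`. -/
def slopePoint (m : F) : PGPoint F :=
  mk F ![0, 1, m] fun h => one_ne_zero (congrFun h 1)

/-- The point `⟨(0,0,1)⟩` at infinity on the affine lines `Y = a`. -/
def verticalPoint (F : Type*) [Field F] : PGPoint F :=
  mk F ![0, 0, 1] fun h => one_ne_zero (congrFun h 2)

theorem affinePoint_mem_pointsOn {L : Submodule F (Fin 3 → F)} {y z : F} :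
    affinePoint y z ∈ pointsOn L ↔ ![1, y, z] ∈ L :=
  mk_mem_pointsOn _

theorem slopePoint_mem_pointsOn {L : Submodule F (Fin 3 → F)} {m : F} :
    slopePoint m ∈ pointsOn L ↔ ![0, 1, m] ∈ L :=
  mk_mem_pointsOn _

theorem verticalPoint_mem_pointsOn {L : Submodule F (Fin 3 → F)} :
    verticalPoint F ∈ pointsOn L ↔ ![0, 0, 1] ∈ L :=
  mk_mem_pointsOn _

theorem affinePoint_inj {y z y' z' : F} :
    affinePoint y z = affinePoint y' z' ↔ y = y' ∧ z = z' := by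
  refine ⟨fun h => ?_, by rintro ⟨rfl, rfl⟩; rfl⟩
  obtain ⟨a, ha⟩ := (mk_eq_mk_iff' F _ _ _ _).mp h
  obtain rfl : a = 1 := by simpa using congrFun ha 0
  rw [one_smul] at ha
  exact ⟨(congrFun ha 1).symm, (congrFun ha 2).symm⟩

theorem slopePoint_injective : Function.Injective (slopePoint : F → PGPoint F) := by
  intro m m' h
  obtain ⟨a, ha⟩ := (mk_eq_mk_iff' F _ _ _ _).mp h
  obtain rfl : a = 1 := by simpa using congrFun ha 1
  rw [one_smul] at ha
  exact (congrFun ha 2).symm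

theorem slopePoint_ne_verticalPoint (m : F) : slopePoint m ≠ verticalPoint F := by
  intro h
  obtain ⟨a, ha⟩ := (mk_eq_mk_iff' F _ _ _ _).mp h
  simpa using congrFun ha 1

theorem affinePoint_notMem_lineX0 (y z : F) : affinePoint y z ∉ pointsOn (lineX0 F) := by
  simp [affinePoint_mem_pointsOn, mem_lineX0]

theorem slopePoint_mem_lineX0 (m : F) : slopePoint m ∈ pointsOn (lineX0 F) := by
  simp [slopePoint_mem_pointsOn, mem_lineX0]

theorem verticalPoint_mem_lineX0 : verticalPoint F ∈ pointsOn (lineX0 F) := by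
  simp [verticalPoint_mem_pointsOn, mem_lineX0]

theorem pointsOn_lineX0 :
    pointsOn (lineX0 F) = insert (verticalPoint F) (Set.range slopePoint) := by
  ext P
  constructor
  · induction P using Projectivization.ind with | _ v hv
    intro h
    have h0 : v 0 = 0 := (mk_mem_pointsOn hv).mp h
    by_cases h1 : v 1 = 0
    · refine Or.inl ((mk_eq_mk_iff' F _ _ _ _).mpr ⟨v 2, ?_⟩)
      ext i
      fin_cases i <;> simp [h0, h1]
    · refine Or.inr ⟨v 2 / v 1, ((mk_eq_mk_iff' F _ _ _ _).mpr ⟨v 1, ?_⟩).symm⟩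
      ext i
      fin_cases i <;> simp [h0, mul_div_cancel₀ _ h1]
  · rintro (rfl | ⟨m, rfl⟩)
    · exact verticalPoint_mem_lineX0
    · exact slopePoint_mem_lineX0 m

/-- The graph of `f`, as the set of affine points `⟨(1,x,f x)⟩`. -/
def graphPoints (f : F → F) : Set (PGPoint F) :=
  {P | ∃ x : F, P.submodule = Submodule.span F {![1, x, f x]}}

/-- The points `⟨(0,x,f x)⟩` with `x ≠ 0` on the line at infinity; for additive `f` these are the
directions determined by the graph of `f`. -/
def directionPoints (f : F → F) : Set (PGPoint F) :=
  {P | ∃ x : F, x ≠ 0 ∧ P.submodule = Submodule.span F {![0, x, f x]}}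

/-- The graph of `f` together with the points at infinity outside `directionPoints f`. It is a set
without tangents when `f` is additive and `F` is finite. -/
def tangentFreeSet (f : F → F) : Set (PGPoint F) :=
  graphPoints f ∪ (pointsOn (lineX0 F) \ directionPoints f)

theorem graphPoints_eq_range (f : F → F) :
    graphPoints f = Set.range fun x => affinePoint x (f x) := by
  ext P
  exact exists_congr fun x => (submodule_eq_span_singleton_iff _ P).trans eq_comm

theorem directionPoints_eq_range (f : F → F) :
    directionPoints f = Set.range fun u : Fˣ => slopePoint (f u / u) := by
  have submodule_eq_iff {x : F} (hx : x ≠ 0) (P : PGPoint F) :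
      P.submodule = Submodule.span F {![0, x, f x]} ↔ slopePoint (f x / x) = P := by
    have hv : ![0, x, f x] ≠ 0 := fun h => hx (congrFun h 1)
    have hslope : mk F ![0, x, f x] hv = slopePoint (f x / x) := by
      refine (mk_eq_mk_iff' F _ _ _ _).mpr ⟨x, ?_⟩
      simp [mul_div_cancel₀ _ hx]
    rw [submodule_eq_span_singleton_iff hv, hslope, eq_comm]
  ext P
  constructor
  · rintro ⟨x, hx, hP⟩
    exact ⟨Units.mk0 x hx, (submodule_eq_iff hx P).mp hP⟩
  · rintro ⟨u, hP⟩
    exact ⟨u, u.ne_zero, (submodule_eq_iff u.ne_zero P).mpr hP⟩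

theorem slopePoint_mem_directionPoints {f : F → F} {m : F} :
    slopePoint m ∈ directionPoints f ↔ ∃ t, t ≠ 0 ∧ f t = m * t := by
  rw [directionPoints_eq_range]
  constructor
  · rintro ⟨u, hu⟩
    exact ⟨u, u.ne_zero, (div_eq_iff u.ne_zero).mp (slopePoint_injective hu)⟩
  · rintro ⟨t, ht, hm⟩
    exact ⟨Units.mk0 t ht, congrArg slopePoint ((div_eq_iff ht).mpr hm)⟩

theorem directionPoints_subset_lineX0 (f : F → F) :
    directionPoints f ⊆ pointsOn (lineX0 F) := by
  rw [directionPoints_eq_range]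
  rintro _ ⟨u, rfl⟩
  exact slopePoint_mem_lineX0 _

theorem affinePoint_mem_tangentFreeSet (f : F → F) (x : F) :
    affinePoint x (f x) ∈ tangentFreeSet f := by
  rw [tangentFreeSet, graphPoints_eq_range]
  exact Or.inl ⟨x, rfl⟩

theorem verticalPoint_mem_tangentFreeSet (f : F → F) : verticalPoint F ∈ tangentFreeSet f := by
  refine Or.inr ⟨verticalPoint_mem_lineX0, ?_⟩
  rw [directionPoints_eq_range]
  rintro ⟨u, hu⟩
  exact slopePoint_ne_verticalPoint _ hu

theorem slopePoint_mem_tangentFreeSet {f : F → F} {m : F} (hm : slopePoint m ∉ directionPoints f) :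
    slopePoint m ∈ tangentFreeSet f :=
  Or.inr ⟨slopePoint_mem_lineX0 m, hm⟩

theorem exists_slopePoint_notMem_directionPoints [Finite F] (f : F → F) :
    ∃ m, slopePoint m ∉ directionPoints f := by
  by_contra! hall
  have hsurj : Function.Surjective fun u : Fˣ => f u / u := fun m => by
    obtain ⟨t, ht, hm⟩ := slopePoint_mem_directionPoints.mp (hall m)
    exact ⟨Units.mk0 t ht, (div_eq_iff ht).mpr hm⟩
  have hle := Nat.card_le_card_of_surjective _ hsurj
  have hpos : 0 < Nat.card F := Nat.card_pos
  rw [Nat.card_units] at hle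
  omega

theorem tangentFreeSet_inter_lineX0_nontrivial [Finite F] (f : F → F) :
    (tangentFreeSet f ∩ pointsOn (lineX0 F)).Nontrivial := by
  obtain ⟨m, hm⟩ := exists_slopePoint_notMem_directionPoints f
  exact ⟨slopePoint m, ⟨slopePoint_mem_tangentFreeSet hm, slopePoint_mem_lineX0 m⟩,
    verticalPoint F, ⟨verticalPoint_mem_tangentFreeSet f, verticalPoint_mem_lineX0⟩,
    slopePoint_ne_verticalPoint m⟩

theorem tangentFreeSet_inter_verticalLine_nontrivial (f : F → F) (a : F) :
    (tangentFreeSet f ∩ pointsOn (verticalLine a)).Nontrivial := by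
  refine ⟨affinePoint a (f a), ⟨affinePoint_mem_tangentFreeSet f a, ?_⟩,
    verticalPoint F, ⟨verticalPoint_mem_tangentFreeSet f, ?_⟩, fun h => ?_⟩
  · simp [affinePoint_mem_pointsOn, mem_verticalLine]
  · simp [verticalPoint_mem_pointsOn, mem_verticalLine]
  · exact affinePoint_notMem_lineX0 _ _ (h ▸ verticalPoint_mem_lineX0)

theorem affinePoint_mem_slopeLine {m d y z : F} :
    affinePoint y z ∈ pointsOn (slopeLine m d) ↔ z = m * y + d := by
  simp [affinePoint_mem_pointsOn, mem_slopeLine]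

theorem slopePoint_mem_slopeLine {m d m' : F} :
    slopePoint m' ∈ pointsOn (slopeLine m d) ↔ m' = m := by
  simp [slopePoint_mem_pointsOn, mem_slopeLine]

theorem verticalPoint_notMem_slopeLine (m d : F) :
    verticalPoint F ∉ pointsOn (slopeLine m d) := by
  simp [verticalPoint_mem_pointsOn, mem_slopeLine]

theorem exists_eq_affinePoint_of_mem_tangentFreeSet_of_mem_slopeLine {f : F → F} {m d : F}
    (hm : slopePoint m ∈ directionPoints f) {P : PGPoint F} (hP : P ∈ tangentFreeSet f)
    (hPL : P ∈ pointsOn (slopeLine m d)) : ∃ x, P = affinePoint x (f x) := by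
  rw [tangentFreeSet, graphPoints_eq_range, pointsOn_lineX0] at hP
  obtain ⟨x, rfl⟩ | ⟨rfl | ⟨m', rfl⟩, hPD⟩ := hP
  · exact ⟨x, rfl⟩
  · exact absurd hPL (verticalPoint_notMem_slopeLine m d)
  · rw [slopePoint_mem_slopeLine.mp hPL] at hPD
    exact absurd hm hPD

theorem tangentFreeSet_inter_slopeLine_nontrivial_of_mem (f : F →+ F) {m d : F}
    (hm : slopePoint m ∈ directionPoints f)
    (hne : (tangentFreeSet f ∩ pointsOn (slopeLine m d)).Nonempty) :
    (tangentFreeSet f ∩ pointsOn (slopeLine m d)).Nontrivial := by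
  obtain ⟨P, hP, hPL⟩ := hne
  obtain ⟨x, rfl⟩ := exists_eq_affinePoint_of_mem_tangentFreeSet_of_mem_slopeLine hm hP hPL
  obtain ⟨t, ht, hft⟩ := slopePoint_mem_directionPoints.mp hm
  have hxt : affinePoint (x + t) (f (x + t)) ∈ pointsOn (slopeLine m d) := by
    rw [affinePoint_mem_slopeLine] at hPL ⊢
    rw [map_add, hPL, hft]
    ring
  refine ⟨_, ⟨hP, hPL⟩, _, ⟨affinePoint_mem_tangentFreeSet f (x + t), hxt⟩, fun h => ht ?_⟩
  exact left_eq_add.mp (affinePoint_inj.mp h).1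

theorem surjective_sub_mul_of_slopePoint_notMem_directionPoints [Finite F] (f : F →+ F) {m : F}
    (hm : slopePoint m ∉ directionPoints f) : Function.Surjective fun x => f x - m * x := by
  refine Finite.surjective_of_injective (f := f - AddMonoidHom.mulLeft m) ?_
  refine (injective_iff_map_eq_zero _).mpr fun t ht => ?_
  by_contra ht0
  exact hm (slopePoint_mem_directionPoints.mpr ⟨t, ht0, sub_eq_zero.mp ht⟩)

theorem tangentFreeSet_inter_slopeLine_nontrivial_of_notMem [Finite F] (f : F →+ F) {m : F}
    (hm : slopePoint m ∉ directionPoints f) (d : F) :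
    (tangentFreeSet f ∩ pointsOn (slopeLine m d)).Nontrivial := by
  obtain ⟨x, hx⟩ := surjective_sub_mul_of_slopePoint_notMem_directionPoints f hm d
  refine ⟨affinePoint x (f x), ⟨affinePoint_mem_tangentFreeSet f x, ?_⟩,
    slopePoint m, ⟨slopePoint_mem_tangentFreeSet hm, ?_⟩, fun h => ?_⟩
  · exact affinePoint_mem_slopeLine.mpr (sub_eq_iff_eq_add'.mp hx)
  · exact slopePoint_mem_slopeLine.mpr rfl
  · exact affinePoint_notMem_lineX0 _ _ (h ▸ slopePoint_mem_lineX0 m)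

theorem noTangents_tangentFreeSet [Finite F] (f : F →+ F) : NoTangents (tangentFreeSet f) := by
  rintro L hL ⟨P, hP, huniq⟩
  suffices h : (tangentFreeSet f ∩ pointsOn L).Nontrivial by
    obtain ⟨Q, hQ, hQP⟩ := h.exists_ne P
    exact hQP (huniq Q hQ)
  obtain rfl | ⟨a, rfl⟩ | ⟨m, d, rfl⟩ := hL.eq_lineX0_or_verticalLine_or_slopeLine
  · exact tangentFreeSet_inter_lineX0_nontrivial f
  · exact tangentFreeSet_inter_verticalLine_nontrivial f a
  · by_cases hm : slopePoint m ∈ directionPoints f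
    · exact tangentFreeSet_inter_slopeLine_nontrivial_of_mem f hm ⟨P, hP⟩
    · exact tangentFreeSet_inter_slopeLine_nontrivial_of_notMem f hm d

theorem ncard_graphPoints (f : F → F) : (graphPoints f).ncard = Nat.card F := by
  rw [graphPoints_eq_range, Set.ncard_range_of_injective]
  exact fun x y h => (affinePoint_inj.mp h).1

theorem ncard_pointsOn_lineX0 [Finite F] : (pointsOn (lineX0 F)).ncard = Nat.card F + 1 := by
  rw [pointsOn_lineX0, Set.ncard_insert_of_notMem,
    Set.ncard_range_of_injective slopePoint_injective]
  rintro ⟨m, hm⟩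
  exact slopePoint_ne_verticalPoint m hm

theorem ncard_tangentFreeSet [Finite F] (f : F → F) :
    (tangentFreeSet f).ncard = 2 * Nat.card F + 1 - (directionPoints f).ncard := by
  have hdisj : Disjoint (graphPoints f) (pointsOn (lineX0 F) \ directionPoints f) := by
    rw [Set.disjoint_left, graphPoints_eq_range]
    rintro _ ⟨x, rfl⟩ h
    exact affinePoint_notMem_lineX0 _ _ h.1
  have hle := Set.ncard_le_ncard (directionPoints_subset_lineX0 f)
  rw [ncard_pointsOn_lineX0] at hle
  rw [tangentFreeSet, Set.ncard_union_eq hdisj,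
    Set.ncard_sdiff (directionPoints_subset_lineX0 f), ncard_graphPoints, ncard_pointsOn_lineX0]
  omega

theorem directionPoints_pow_eq_image {n : ℕ} (hn : n ≠ 0) :
    directionPoints (fun x : F => x ^ n) =
      (fun u : Fˣ => slopePoint (u : F)) '' (powMonoidHom (n - 1) : Fˣ →* Fˣ).range := by
  rw [directionPoints_eq_range, MonoidHom.coe_range, ← Set.range_comp]
  refine congrArg Set.range (funext fun u => congrArg slopePoint ?_)
  rw [div_eq_iff u.ne_zero, powMonoidHom_apply, Units.val_pow_eq_pow_val, pow_sub_one_mul hn]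

theorem ncard_directionPoints_pow [Finite F] {n : ℕ} (hn : n ≠ 0) :
    (directionPoints fun x : F => x ^ n).ncard =
      (Nat.card F - 1) / (Nat.card F - 1).gcd (n - 1) := by
  have hinj : Function.Injective fun u : Fˣ => slopePoint (u : F) :=
    slopePoint_injective.comp Units.val_injective
  rw [directionPoints_pow_eq_image hn,
    Set.ncard_image_of_injective _ hinj,
    ← Nat.card_coe_set_eq, SetLike.coe_sort_coe, IsCyclic.card_powMonoidHom_range, Nat.card_units]

theorem stmt_16_general [Fintype F] {p h : ℕ} (hp : p.Prime) (k : ℕ)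
    (hcard : Fintype.card F = p ^ h) :
    NoTangents (tangentFreeSet fun x : F => x ^ p ^ k) ∧
      (tangentFreeSet fun x : F => x ^ p ^ k).ncard =
        2 * p ^ h + 1 - (p ^ h - 1) / (p ^ h.gcd k - 1) := by
  have : Fact p.Prime := ⟨hp⟩
  have : CharP F p := charP_of_card_eq_prime_pow hcard
  refine ⟨noTangents_tangentFreeSet (iterateFrobenius F p k : F →+ F), ?_⟩
  rw [ncard_tangentFreeSet, ncard_directionPoints_pow (pow_ne_zero k hp.ne_zero),
    Nat.card_eq_fintype_card, hcard, Nat.pow_sub_one_gcd_pow_sub_one]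

/-- for `q = p^h`, `p` an odd prime, the set
`A = {⟨(1,x,x^p)⟩ : x ∈ F_q}` together with the set `N` of points of the line
`X = 0` not of the form `⟨(0,x,x^p)⟩` (`x ≠ 0`) is a set without tangents of
size `2q + 1 - (q-1)/(p-1)`. -/
theorem stmt_16 [Fintype F] (p h : ℕ) (hp : p.Prime) (hodd : Odd p) (hh : 1 ≤ h)
    (hcard : Fintype.card F = p ^ h) :
    NoTangents
      ({P : PGPoint F | ∃ x : F, P.submodule = Submodule.span F {![1, x, x ^ p]}} ∪
        (pointsOn (lineX0 F) \
          {P : PGPoint F | ∃ x : F, x ≠ 0 ∧ P.submodule = Submodule.span F {![0, x, x ^ p]}})) ∧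
    ({P : PGPoint F | ∃ x : F, P.submodule = Submodule.span F {![1, x, x ^ p]}} ∪
        (pointsOn (lineX0 F) \
          {P : PGPoint F | ∃ x : F, x ≠ 0 ∧ P.submodule = Submodule.span F {![0, x, x ^ p]}})).ncard
      = 2 * p ^ h + 1 - (p ^ h - 1) / (p - 1) := by
  simpa only [tangentFreeSet, graphPoints, directionPoints, pow_one, Nat.gcd_one_right] using
    stmt_16_general hp 1 hcard
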